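/- arXiv:1009.4502 — 2 statements merged into one kernel-verified Lean document; each statement's English description precedes it below -/
import Mathlib

section
/- Let f : ℝ³ → ℝ be continuous, nonnegative and rapidly decaying (i.e. sup_v (1+|v|)^k f(v) < ∞ for every k ∈ ℕ). Then for every collision invariant ψ(v) = a + b·v + c|v|² (a, c ∈ ℝ, b ∈ ℝ³), the collision integral satisfies ∫_{ℝ³} C(f)(v) ψ(v) dv = 0. In particular ∫ C(f) dv = 0, ∫ C(f) v_k dv = 0 for k = 1,2,3, and ∫ C(f) |v|² dv = 0 (conservation of mass, momentum and energy by collisions). -/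
/-!
Write `G(v, v*, ω) = f(v) f(v*) |(v - v*)·ω|` and let `T(v, v*, ω) = (v', v*', ω)` be the collision
map. For each unit vector `ω` the map `(v, v*) ↦ (v', v*')` is a linear involution of `ℝ³ × ℝ³`,
hence has determinant `±1` and preserves Lebesgue measure; so `T` preserves the product measure
(`measurePreserving_collisionMap`). Since `|(v' - v*')·ω| = |(v - v*)·ω|`, the integrand of `C(f)`
is `G ∘ T - G`, and

  `∫ C(f) ψ = ∫ (G ∘ T - G) ψ(v) = ∫ G (ψ(v') - ψ(v))`.

The exchange `(v, v*) ↦ (v*, v)` preserves the measure and `G`, and turns `v'` into `v*'`, so the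
right-hand side is half of `∫ G (ψ(v') + ψ(v*') - ψ(v) - ψ(v*))`, which vanishes because `ψ` is a
collision invariant (`integral_collisionIntegral_mul_eq_zero`). Rapid decay of `f` makes `G` times
any function of quadratic growth integrable (`integrable_kernel_mul`), which justifies Fubini's
theorem and the splitting of the integrals.
-/


open MeasureTheory
open scoped RealInnerProductSpace

noncomputable section

/-- The post-collision velocity `v' = v − ((v−v*)·ω)ω`. -/
def vPost (v vs ω : EuclideanSpace ℝ (Fin 3)) : EuclideanSpace ℝ (Fin 3) :=
  v - ⟪v - vs, ω⟫ • ω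

/-- The post-collision velocity `v*' = v* + ((v−v*)·ω)ω`. -/
def vsPost (v vs ω : EuclideanSpace ℝ (Fin 3)) : EuclideanSpace ℝ (Fin 3) :=
  vs + ⟪v - vs, ω⟫ • ω

/-- The surface measure on the unit sphere `S² ⊂ ℝ³`. -/
def sphereMeasure : Measure (Metric.sphere (0 : EuclideanSpace ℝ (Fin 3)) 1) :=
  (volume : Measure (EuclideanSpace ℝ (Fin 3))).toSphere

/-- The (dimensionless, hard-sphere) Boltzmann collision integral
`C(f)(v) = ∫_{ℝ³}∫_{S²} (f(v')f(v*') − f(v)f(v*)) |(v−v*)·ω| dω dv*`. -/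
def collisionIntegral (f : EuclideanSpace ℝ (Fin 3) → ℝ)
    (v : EuclideanSpace ℝ (Fin 3)) : ℝ :=
  ∫ vs, (∫ ω : Metric.sphere (0 : EuclideanSpace ℝ (Fin 3)) 1,
    (f (vPost v vs ω) * f (vsPost v vs ω) - f v * f vs) *
      |⟪v - vs, (ω : EuclideanSpace ℝ (Fin 3))⟫| ∂sphereMeasure)

/-- A function on `ℝ³` is rapidly decaying if `sup_v (1+|v|)^k f(v) < ∞` for every `k ∈ ℕ`. -/
def RapidlyDecaying (f : EuclideanSpace ℝ (Fin 3) → ℝ) : Prop :=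
  ∀ k : ℕ, ∃ C : ℝ, ∀ v, (1 + ‖v‖) ^ k * f v ≤ C

/-- `ln f` has polynomial growth: `|ln f(v)| ≤ C(1+|v|)^m` for some constants `C, m`. -/
def LogPolyGrowth (f : EuclideanSpace ℝ (Fin 3) → ℝ) : Prop :=
  ∃ (C : ℝ) (m : ℕ), ∀ v, |Real.log (f v)| ≤ C * (1 + ‖v‖) ^ m

/-- Velocity space `ℝ³`. -/
local notation "E3" => EuclideanSpace ℝ (Fin 3)

/-- The unit sphere `S²`. -/
local notation "S2" => Metric.sphere (0 : EuclideanSpace ℝ (Fin 3)) 1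

instance : IsFiniteMeasure sphereMeasure := by
  unfold sphereMeasure; infer_instance

/-! ### The collision map -/

/-- For fixed `ω`, the collision `(v, v*) ↦ (v', v*')` as a linear map of `ℝ³ × ℝ³`. -/
def collisionLin (ω : E3) : E3 × E3 →ₗ[ℝ] E3 × E3 where
  toFun p := (vPost p.1 p.2 ω, vsPost p.1 p.2 ω)
  map_add' p q := by
    have h : ⟪p.1 + q.1 - (p.2 + q.2), ω⟫ = ⟪p.1 - p.2, ω⟫ + ⟪q.1 - q.2, ω⟫ := by
      rw [← inner_add_left]; congr 1; abel
    ext1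
    · simp only [vPost, Prod.fst_add, Prod.snd_add, h, add_smul]; abel
    · simp only [vsPost, Prod.fst_add, Prod.snd_add, h, add_smul]; abel
  map_smul' r p := by
    have h : ⟪r • p.1 - r • p.2, ω⟫ = r * ⟪p.1 - p.2, ω⟫ := by
      rw [← smul_sub, real_inner_smul_left]
    ext1
    · simp only [vPost, Prod.smul_fst, Prod.smul_snd, h, mul_smul, smul_sub, RingHom.id_apply]
    · simp only [vsPost, Prod.smul_fst, Prod.smul_snd, h, mul_smul, smul_add, RingHom.id_apply]

/-- A collision reverses the component of the relative velocity along `ω`. -/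
lemma inner_post (v vs ω : E3) (hω : ‖ω‖ = 1) :
    ⟪vPost v vs ω - vsPost v vs ω, ω⟫ = -⟪v - vs, ω⟫ := by
  have h : vPost v vs ω - vsPost v vs ω = (v - vs) - (2 * ⟪v - vs, ω⟫) • ω := by
    simp only [vPost, vsPost, two_mul, add_smul]; abel
  rw [h, inner_sub_left, real_inner_smul_left, real_inner_self_eq_norm_sq, hω]
  ring

lemma vPost_post (v vs ω : E3) (hω : ‖ω‖ = 1) :
    vPost (vPost v vs ω) (vsPost v vs ω) ω = v := by
  rw [vPost, inner_post v vs ω hω, vPost]; simp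

lemma vsPost_post (v vs ω : E3) (hω : ‖ω‖ = 1) :
    vsPost (vPost v vs ω) (vsPost v vs ω) ω = vs := by
  rw [vsPost, inner_post v vs ω hω, vsPost]; simp

lemma vPost_swap (v vs ω : E3) : vPost vs v ω = vsPost v vs ω := by
  have h : vs - v = -(v - vs) := by abel
  rw [vPost, vsPost, h, inner_neg_left]; simp

lemma vPost_add_vsPost (v vs ω : E3) : vPost v vs ω + vsPost v vs ω = v + vs := by
  simp only [vPost, vsPost]; abel

lemma norm_sq_post (v vs ω : E3) (hω : ‖ω‖ = 1) :
    ‖vPost v vs ω‖ ^ 2 + ‖vsPost v vs ω‖ ^ 2 = ‖v‖ ^ 2 + ‖vs‖ ^ 2 := by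
  simp only [vPost, vsPost, norm_sub_sq_real, norm_add_sq_real, real_inner_smul_right, norm_smul,
    hω, inner_sub_left, mul_one, Real.norm_eq_abs, sq_abs]
  ring

/-- `(v, v*) ↦ (v', v*')` is a linear involution, so its determinant is `±1` and it preserves
Lebesgue measure. -/
lemma map_collisionLin (ω : E3) (hω : ‖ω‖ = 1) :
    Measure.map (collisionLin ω) ((volume : Measure E3).prod volume)
      = (volume : Measure E3).prod volume := by
  have hinv : collisionLin ω * collisionLin ω = 1 := by
    refine LinearMap.ext fun p => ?_
    exact Prod.ext (vPost_post p.1 p.2 ω hω) (vsPost_post p.1 p.2 ω hω)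
  have hdet : LinearMap.det (collisionLin ω) * LinearMap.det (collisionLin ω) = 1 := by
    rw [← map_mul, hinv, map_one]
  have habs : |(LinearMap.det (collisionLin ω))⁻¹| = 1 := by
    rcases mul_self_eq_one_iff.mp hdet with h | h <;> simp [h]
  rw [Measure.map_linearMap_addHaar_eq_smul_addHaar _ (left_ne_zero_of_mul_eq_one hdet), habs]
  simp

/-- The measure `dω dv dv*` on collision configurations `(ω, (v, v*))`. -/
def collMeasure : Measure (S2 × (E3 × E3)) :=
  sphereMeasure.prod ((volume : Measure E3).prod volume)

/-- The collision map `(ω, (v, v*)) ↦ (ω, (v', v*'))`. -/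
def collisionMap (p : S2 × (E3 × E3)) : S2 × (E3 × E3) :=
  (p.1, collisionLin p.1 p.2)

@[fun_prop]
lemma continuous_vPost : Continuous fun p : S2 × (E3 × E3) => vPost p.2.1 p.2.2 p.1 := by
  unfold vPost; fun_prop

@[fun_prop]
lemma continuous_vsPost : Continuous fun p : S2 × (E3 × E3) => vsPost p.2.1 p.2.2 p.1 := by
  unfold vsPost; fun_prop

lemma measurePreserving_collisionMap :
    MeasurePreserving collisionMap collMeasure collMeasure := by
  refine MeasurePreserving.skew_product (MeasurePreserving.id sphereMeasure)
    (g := fun ω p => collisionLin (ω : E3) p) ?_ ?_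
  · exact (continuous_vPost.prodMk continuous_vsPost).measurable
  · exact Filter.Eventually.of_forall fun ω => map_collisionLin ω (by simp)

/-- Exchanging the two particles. -/
lemma measurePreserving_exchange :
    MeasurePreserving (Prod.map id Prod.swap : S2 × (E3 × E3) → S2 × (E3 × E3))
      collMeasure collMeasure :=
  (MeasurePreserving.id sphereMeasure).prod Measure.measurePreserving_swap

/-! ### Integrability -/

/-- The loss kernel `f(v) f(v*) |(v - v*)·ω|`. -/
def kernel (f : E3 → ℝ) (p : S2 × (E3 × E3)) : ℝ :=
  f p.2.1 * f p.2.2 * |⟪p.2.1 - p.2.2, (p.1 : E3)⟫|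

lemma continuous_kernel {f : E3 → ℝ} (hf : Continuous f) : Continuous (kernel f) := by
  unfold kernel; fun_prop

/-- Rapid decay of `f` absorbs the linear growth of the hard-sphere cross section together with a
factor of quadratic growth in each velocity. -/
lemma integrable_kernel_mul {f : E3 → ℝ} (hf : Continuous f) (hf0 : ∀ v, 0 ≤ f v)
    (hdec : RapidlyDecaying f) {Φ : S2 × (E3 × E3) → ℝ} (hΦ : Continuous Φ) {K : ℝ}
    (hK : ∀ p, |Φ p| ≤ K * ((1 + ‖p.2.1‖) * (1 + ‖p.2.2‖)) ^ 2) :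
    Integrable (fun p => kernel f p * Φ p) collMeasure := by
  -- The exponent `7 = 3 + 4`: three powers to absorb, and decay of order `4 > dim ℝ³` left over.
  obtain ⟨C, hC⟩ := hdec 7
  have hg : Integrable (fun v : E3 => (1 + ‖v‖) ^ (-(4 : ℝ))) volume :=
    integrable_one_add_norm (by rw [finrank_euclideanSpace_fin]; norm_num)
  have hfg : ∀ v, f v * (1 + ‖v‖) ^ 3 ≤ C * (1 + ‖v‖) ^ (-(4 : ℝ)) := by
    intro v
    have hA : 0 < 1 + ‖v‖ := by positivity
    have hr : (1 + ‖v‖) ^ (-(4 : ℝ)) = ((1 + ‖v‖) ^ 4)⁻¹ := by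
      rw [Real.rpow_neg hA.le]; norm_cast
    rw [hr, ← div_eq_mul_inv, le_div_iff₀ (by positivity)]
    calc _ = (1 + ‖v‖) ^ 7 * f v := by ring
      _ ≤ C := hC v
  have hdom : Integrable (fun p : S2 × (E3 × E3) =>
      K * ((C * (1 + ‖p.2.1‖) ^ (-(4 : ℝ))) * (C * (1 + ‖p.2.2‖) ^ (-(4 : ℝ))))) collMeasure :=
    (((hg.const_mul C).mul_prod (hg.const_mul C)).comp_snd sphereMeasure).const_mul K
  refine hdom.mono' ((continuous_kernel hf).mul hΦ).aestronglyMeasurable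
    (Filter.Eventually.of_forall ?_)
  rintro ⟨ω, v, vs⟩
  have hω : ‖(ω : E3)‖ = 1 := by simp
  have hK' := hK (ω, v, vs)
  simp only at hK'
  have hv := norm_nonneg v
  have hvs := norm_nonneg vs
  have hK0 : 0 ≤ K := by
    by_contra! h
    have h1 : 0 < ((1 + ‖v‖) * (1 + ‖vs‖)) ^ 2 := by positivity
    nlinarith [abs_nonneg (Φ (ω, v, vs))]
  have hin : |⟪v - vs, (ω : E3)⟫| ≤ (1 + ‖v‖) * (1 + ‖vs‖) := by
    calc _ ≤ ‖v - vs‖ * ‖(ω : E3)‖ := abs_real_inner_le_norm _ _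
      _ ≤ ‖v‖ + ‖vs‖ := by rw [hω, mul_one]; exact norm_sub_le _ _
      _ ≤ _ := by nlinarith [mul_nonneg hv hvs]
  have hfv := hf0 v
  have hfvs := hf0 vs
  simp only [kernel, Real.norm_eq_abs, abs_mul, abs_abs, abs_of_nonneg hfv, abs_of_nonneg hfvs]
  calc f v * f vs * |⟪v - vs, (ω : E3)⟫| * |Φ (ω, v, vs)|
      ≤ f v * f vs * ((1 + ‖v‖) * (1 + ‖vs‖)) * (K * ((1 + ‖v‖) * (1 + ‖vs‖)) ^ 2) := by gcongr
    _ = K * ((f v * (1 + ‖v‖) ^ 3) * (f vs * (1 + ‖vs‖) ^ 3)) := by ring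
    _ ≤ _ := by
      have h1 := hfg v
      have h2 := hfg vs
      have h3 : 0 ≤ f v * (1 + ‖v‖) ^ 3 := by positivity
      have h4 : 0 ≤ f vs * (1 + ‖vs‖) ^ 3 := by positivity
      exact mul_le_mul_of_nonneg_left (mul_le_mul h1 h2 h4 (h3.trans h1)) hK0

lemma one_add_norm_vPost_le (v vs ω : E3) (hω : ‖ω‖ = 1) :
    1 + ‖vPost v vs ω‖ ≤ 2 * ((1 + ‖v‖) * (1 + ‖vs‖)) := by
  have h1 : ‖vPost v vs ω‖ ≤ ‖v‖ + (‖v‖ + ‖vs‖) := by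
    calc _ ≤ ‖v‖ + ‖⟪v - vs, ω⟫ • ω‖ := norm_sub_le _ _
      _ ≤ ‖v‖ + ‖v - vs‖ := by
        rw [norm_smul, hω, mul_one]
        have := norm_inner_le_norm (𝕜 := ℝ) (v - vs) ω
        rw [hω, mul_one] at this
        gcongr
      _ ≤ _ := by gcongr; exact norm_sub_le _ _
  nlinarith [norm_nonneg v, norm_nonneg vs, mul_nonneg (norm_nonneg v) (norm_nonneg vs)]

/-! ### Weak form and conservation -/

/-- Reordering `(v, (v*, ω)) ↦ (ω, (v, v*))`, from the order of integration used in
`∫ C(f) ψ` to the one used in `collMeasure`. -/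
lemma measurePreserving_reorder :
    MeasurePreserving (MeasurableEquiv.prodAssoc.symm.trans MeasurableEquiv.prodComm :
        E3 × (E3 × S2) ≃ᵐ S2 × (E3 × E3))
      ((volume : Measure E3).prod ((volume : Measure E3).prod sphereMeasure)) collMeasure :=
  (Measure.measurePreserving_swap (μ := (volume : Measure E3).prod (volume : Measure E3))
    (ν := sphereMeasure)).comp
    ((measurePreserving_prodAssoc (volume : Measure E3) (volume : Measure E3)
      sphereMeasure).symm MeasurableEquiv.prodAssoc)

/-- Conservation for an arbitrary continuous collision invariant of at most quadratic growth. -/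
lemma integral_collisionIntegral_mul_eq_zero {f : E3 → ℝ} (hf : Continuous f)
    (hf0 : ∀ v, 0 ≤ f v) (hdec : RapidlyDecaying f) {ψ : E3 → ℝ} (hψ : Continuous ψ) {K : ℝ}
    (hK : ∀ v, |ψ v| ≤ K * (1 + ‖v‖) ^ 2)
    (hinv : ∀ v vs ω : E3, ‖ω‖ = 1 → ψ (vPost v vs ω) + ψ (vsPost v vs ω) = ψ v + ψ vs) :
    ∫ v, collisionIntegral f v * ψ v = 0 := by
  have hK0 : 0 ≤ K := by simpa using (abs_nonneg _).trans (hK 0)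
  have hI1 : Integrable (fun p => kernel f p * ψ p.2.1) collMeasure := by
    refine integrable_kernel_mul hf hf0 hdec (by fun_prop) (K := K) fun p => (hK _).trans ?_
    gcongr
    exact le_mul_of_one_le_right (by positivity) (by simp)
  have hI2 : Integrable (fun p => kernel f p * ψ (vPost p.2.1 p.2.2 p.1)) collMeasure := by
    refine integrable_kernel_mul hf hf0 hdec (by fun_prop) (K := 4 * K) fun p => (hK _).trans ?_
    calc K * (1 + ‖vPost p.2.1 p.2.2 p.1‖) ^ 2
        ≤ K * (2 * ((1 + ‖p.2.1‖) * (1 + ‖p.2.2‖))) ^ 2 := by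
          gcongr; exact one_add_norm_vPost_le _ _ _ (by simp)
      _ = _ := by ring
  have hT := measurePreserving_collisionMap
  -- The gain term against `ψ(v)` is the loss kernel against `ψ(v')`, composed with `T`.
  have hcomp : (fun p : S2 × (E3 × E3) => kernel f (collisionMap p) * ψ p.2.1)
      = (fun p => kernel f p * ψ (vPost p.2.1 p.2.2 p.1)) ∘ collisionMap := by
    funext p
    have := vPost_post p.2.1 p.2.2 p.1 (by simp)
    simp only [Function.comp, collisionMap, collisionLin, LinearMap.coe_mk, AddHom.coe_mk, this]
  have hI3 : Integrable (fun p => kernel f (collisionMap p) * ψ p.2.1) collMeasure := by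
    rw [hcomp]; exact hT.integrable_comp_of_integrable hI2
  have hgain : ∫ p, kernel f (collisionMap p) * ψ p.2.1 ∂collMeasure
      = ∫ p, kernel f p * ψ (vPost p.2.1 p.2.2 p.1) ∂collMeasure := by
    rw [hcomp]
    conv_rhs => rw [← hT.map_eq]
    rw [integral_map hT.aemeasurable (by rw [hT.map_eq]; exact hI2.aestronglyMeasurable)]
    rfl
  have hexch : ∀ H : S2 × (E3 × E3) → ℝ, Integrable H collMeasure →
      ∫ p, H (p.1, p.2.swap) ∂collMeasure = ∫ p, H p ∂collMeasure := by
    intro H hH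
    have hS := measurePreserving_exchange
    conv_rhs => rw [← hS.map_eq]
    rw [integral_map hS.aemeasurable (by rw [hS.map_eq]; exact hH.aestronglyMeasurable)]
    rfl
  have hzero : ∫ p, (kernel f p * ψ (vPost p.2.1 p.2.2 p.1) - kernel f p * ψ p.2.1) ∂collMeasure
      = 0 := by
    have hJe := hexch (fun p => kernel f p * ψ (vPost p.2.1 p.2.2 p.1)
      - kernel f p * ψ p.2.1) (hI2.sub hI1)
    have hneg : (fun p : S2 × (E3 × E3) =>
          kernel f (p.1, p.2.swap) * ψ (vPost p.2.swap.1 p.2.swap.2 p.1)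
          - kernel f (p.1, p.2.swap) * ψ p.2.swap.1)
        = fun p => -(kernel f p * ψ (vPost p.2.1 p.2.2 p.1) - kernel f p * ψ p.2.1) := by
      funext p
      have hk : kernel f (p.1, p.2.swap) = kernel f p := by
        simp only [kernel, Prod.fst_swap, Prod.snd_swap]
        rw [← neg_sub p.2.1 p.2.2, inner_neg_left, abs_neg, mul_comm (f p.2.2)]
      have h := hinv p.2.1 p.2.2 p.1 (by simp)
      rw [hk, Prod.fst_swap, Prod.snd_swap, vPost_swap p.2.1 p.2.2]
      linear_combination kernel f p * h
    simp only at hJe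
    rw [hneg, integral_neg] at hJe
    linarith
  -- Fubini: `∫ C(f) ψ` is the integral of `(G ∘ T - G) ψ(v)` over all configurations.
  have hI : Integrable (fun p => kernel f (collisionMap p) * ψ p.2.1 - kernel f p * ψ p.2.1)
    collMeasure := hI3.sub hI1
  have hR := measurePreserving_reorder
  have hIR := hR.integrable_comp_of_integrable hI
  have hfub := integral_prod _ hIR
  have hreord := hR.integral_comp' (g := fun p : S2 × (E3 × E3) =>
    kernel f (collisionMap p) * ψ p.2.1 - kernel f p * ψ p.2.1)
  have hptw : (fun v => collisionIntegral f v * ψ v) =ᵐ[volume] fun v =>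
      ∫ q, ((fun p : S2 × (E3 × E3) =>
        kernel f (collisionMap p) * ψ p.2.1 - kernel f p * ψ p.2.1) ∘
        (MeasurableEquiv.prodAssoc.symm.trans MeasurableEquiv.prodComm :
          E3 × (E3 × S2) ≃ᵐ S2 × (E3 × E3))) (v, q)
        ∂((volume : Measure E3).prod sphereMeasure) := by
    filter_upwards [hIR.prod_right_ae] with v hv
    rw [integral_prod _ hv, collisionIntegral, ← integral_mul_const]
    refine integral_congr_ae (Filter.Eventually.of_forall fun vs => ?_)
    simp only
    rw [← integral_mul_const]
    refine integral_congr_ae (Filter.Eventually.of_forall fun ω => ?_)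
    have h := inner_post v vs ω (by simp)
    change _ = kernel f (ω, (vPost v vs ω, vsPost v vs ω)) * ψ v - kernel f (ω, (v, vs)) * ψ v
    simp only [kernel, h, abs_neg]
    ring
  rw [integral_congr_ae hptw, ← hfub]
  refine hreord.trans ?_
  rw [integral_sub hI3 hI1, hgain, ← integral_sub hI2 hI1, hzero]

/-- **Conservation of mass, momentum and energy by collisions.** For `f` continuous,
nonnegative and rapidly decaying, and every collision invariant `ψ(v) = a + b·v + c|v|²`,
`∫ C(f) ψ dv = 0`; in particular `∫ C(f) dv = 0`, `∫ C(f) v_k dv = 0` (`k = 1,2,3`) and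
`∫ C(f) |v|² dv = 0`. -/
theorem collisionIntegral_conservation_laws (f : EuclideanSpace ℝ (Fin 3) → ℝ)
    (hf_cont : Continuous f) (hf_nonneg : ∀ v, 0 ≤ f v) (hf_dec : RapidlyDecaying f) :
    (∀ (a c : ℝ) (b : EuclideanSpace ℝ (Fin 3)),
      (∫ v, collisionIntegral f v * (a + ⟪b, v⟫ + c * ‖v‖ ^ 2)) = 0) ∧
    (∫ v, collisionIntegral f v) = 0 ∧
    (∀ k : Fin 3, (∫ v, collisionIntegral f v * v k) = 0) ∧
    (∫ v, collisionIntegral f v * ‖v‖ ^ 2) = 0 := by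
  have key : ∀ (a c : ℝ) (b : E3),
      (∫ v, collisionIntegral f v * (a + ⟪b, v⟫ + c * ‖v‖ ^ 2)) = 0 := by
    intro a c b
    refine integral_collisionIntegral_mul_eq_zero hf_cont hf_nonneg hf_dec (by fun_prop)
      (K := |a| + ‖b‖ + |c|) (fun v => ?_) (fun v vs ω hω => ?_)
    · have hv := norm_nonneg v
      have h1 : |⟪b, v⟫| ≤ ‖b‖ * ‖v‖ := abs_real_inner_le_norm b v
      have h2 : |c * ‖v‖ ^ 2| = |c| * ‖v‖ ^ 2 := by rw [abs_mul, abs_of_nonneg (sq_nonneg ‖v‖)]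
      calc |a + ⟪b, v⟫ + c * ‖v‖ ^ 2| ≤ |a| + |⟪b, v⟫| + |c * ‖v‖ ^ 2| := abs_add_three _ _ _
        _ ≤ |a| * 1 + ‖b‖ * ‖v‖ + |c| * ‖v‖ ^ 2 := by rw [h2, mul_one]; gcongr
        _ ≤ |a| * (1 + ‖v‖) ^ 2 + ‖b‖ * (1 + ‖v‖) ^ 2 + |c| * (1 + ‖v‖) ^ 2 := by
          gcongr <;> nlinarith
        _ = _ := by ring
    · have h1 : ⟪b, vPost v vs ω⟫ + ⟪b, vsPost v vs ω⟫ = ⟪b, v⟫ + ⟪b, vs⟫ := by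
        rw [← inner_add_right, vPost_add_vsPost, inner_add_right]
      linear_combination h1 + c * norm_sq_post v vs ω hω
  refine ⟨key, ?_, fun k => ?_, ?_⟩
  · simpa using key 1 0 0
  · simpa [EuclideanSpace.inner_single_left] using key 0 0 (EuclideanSpace.single k 1)
  · simpa using key 0 1 0

end
end

section
/- (Characterization of collisional equilibria.) Let f : ℝ³ → ℝ be continuous, strictly positive and rapidly decaying, with ln f of polynomial growth. If f(v')f(v*') = f(v)f(v*) for all v, v* ∈ ℝ³ and all unit vectors ω ∈ ℝ³ (where v', v*' are the post-collision velocities), then f is a Maxwellian: there exist ρ > 0, θ > 0 and u ∈ ℝ³ such that f(v) = ρ(2πθ)^{−3/2} exp(−|v−u|²/(2θ)) for every v ∈ ℝ³. -/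
/-! Put `g = log f - log f 0`. Colliding `x + y` with `0` along the direction of `y` gives
`g (x + y) = g x + g y` whenever `x ⊥ y`. Such an orthogonally additive continuous function is
`c ‖x‖² + ⟪b, x⟫`, by treating the odd and even parts separately.

* Odd part (`odd_additive`): in dimension three any `x, y` admit a common orthogonal vector `w`
  with `‖w‖² = |⟪x, y⟫|`. When `⟪x, y⟫ ≥ 0`, the vectors `x + w` and `y - w` are orthogonal and
  the contributions of `w` cancel; when `⟪x, y⟫ < 0` one uses `x + w` and `y + w`. Hence the odd
  part is additive, and by continuity linear.
* Even part (`even_quadratic`): if `‖x‖ = ‖y‖` then `x + y ⊥ x - y`, which shows that the even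
  part depends on the norm only; as a function of `‖x‖²` it is additive on `[0, ∞)`, so it is
  linear there by continuity.

Decay of `f` forces `c < 0`, and completing the square produces the Maxwellian.
-/

open scoped RealInnerProductSpace

noncomputable section

/-- The dimension-three input: any two vectors have a common orthogonal vector of prescribed
length. -/
lemma exists_orthogonal_of_norm (x y : EuclideanSpace ℝ (Fin 3)) (r : ℝ) (hr : 0 ≤ r) :
    ∃ w : EuclideanSpace ℝ (Fin 3), ⟪x, w⟫ = 0 ∧ ⟪y, w⟫ = 0 ∧ ‖w‖ = r := by
  set S : Submodule ℝ (EuclideanSpace ℝ (Fin 3)) := Submodule.span ℝ {x, y} with hS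
  have h1 : Module.finrank ℝ S ≤ 2 := by
    have h := finrank_span_finset_le_card (R := ℝ) ({x, y} : Finset (EuclideanSpace ℝ (Fin 3)))
    have h2 := Finset.card_le_two (a := x) (b := y)
    rw [Finset.coe_pair] at h
    exact h.trans h2
  have h3 := S.finrank_add_finrank_orthogonal
  rw [finrank_euclideanSpace_fin] at h3
  have hne : Sᗮ ≠ ⊥ := by
    intro hb
    rw [hb, finrank_bot] at h3
    omega
  obtain ⟨w, hw, hw0⟩ := Submodule.exists_mem_ne_zero_of_ne_bot hne
  have hx : ⟪x, w⟫ = 0 :=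
    (Submodule.mem_orthogonal S w).1 hw x (Submodule.subset_span (by simp))
  have hy : ⟪y, w⟫ = 0 :=
    (Submodule.mem_orthogonal S w).1 hw y (Submodule.subset_span (by simp))
  have hn : ‖w‖ ≠ 0 := norm_ne_zero_iff.2 hw0
  refine ⟨(r / ‖w‖) • w, ?_, ?_, ?_⟩
  · rw [inner_smul_right, hx, mul_zero]
  · rw [inner_smul_right, hy, mul_zero]
  · rw [norm_smul, Real.norm_eq_abs, abs_of_nonneg (by positivity)]
    field_simp

/-- An odd orthogonally additive function is additive. -/
lemma odd_additive (o : EuclideanSpace ℝ (Fin 3) → ℝ) (hodd : ∀ x, o (-x) = -o x)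
    (hadd : ∀ x y, ⟪x, y⟫ = 0 → o (x + y) = o x + o y) (x y : EuclideanSpace ℝ (Fin 3)) :
    o (x + y) = o x + o y := by
  have key : ∀ x y, 0 ≤ ⟪x, y⟫ → o (x + y) = o x + o y := by
    intro x y hxy
    obtain ⟨w, hx, hy, hw⟩ := exists_orthogonal_of_norm x y (√⟪x, y⟫) (Real.sqrt_nonneg _)
    have hww : ⟪w, w⟫ = ⟪x, y⟫ := by
      rw [real_inner_self_eq_norm_sq, hw, Real.sq_sqrt hxy]
    have hy' : ⟪w, y⟫ = 0 := by rw [real_inner_comm]; exact hy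
    have e1 := hadd (x + w) (y + -w) (by
      simp only [inner_add_left, inner_add_right, inner_neg_right, hww, hx, hy']; ring)
    rw [hadd x w hx, hadd y (-w) (by rw [inner_neg_right, hy, neg_zero]), hodd,
      show x + w + (y + -w) = x + y by abel] at e1
    linarith
  rcases le_or_gt 0 ⟪x, y⟫ with hxy | hxy
  · exact key x y hxy
  · obtain ⟨w, hx, hy, hw⟩ := exists_orthogonal_of_norm x y (√(-⟪x, y⟫)) (Real.sqrt_nonneg _)
    have hww : ⟪w, w⟫ = -⟪x, y⟫ := by
      rw [real_inner_self_eq_norm_sq, hw, Real.sq_sqrt (by linarith)]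
    have hy' : ⟪w, y⟫ = 0 := by rw [real_inner_comm]; exact hy
    have e1 := hadd (x + w) (y + w) (by
      simp only [inner_add_left, inner_add_right, hww, hx, hy']; ring)
    have e2 := hadd (x + y) (w + w) (by
      simp only [inner_add_left, inner_add_right, hx, hy]; ring)
    rw [hadd x w hx, hadd y w hy, show x + w + (y + w) = x + y + (w + w) by abel, e2,
      key w w real_inner_self_nonneg] at e1
    linarith

/-- An even continuous orthogonally additive function is a multiple of the squared norm. -/
lemma even_quadratic (e : EuclideanSpace ℝ (Fin 3) → ℝ) (hcont : Continuous e)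
    (heven : ∀ x, e (-x) = e x)
    (hadd : ∀ x y, ⟪x, y⟫ = 0 → e (x + y) = e x + e y) :
    ∃ c : ℝ, ∀ x, e x = c * ‖x‖ ^ 2 := by
  have h0 : e 0 = 0 := by
    have := hadd 0 0 (by simp)
    simp only [add_zero] at this
    linarith
  have hrad : ∀ x y, ‖x‖ = ‖y‖ → e x = e y := by
    intro x y hxy
    -- Work with the half-sum and half-difference of `x` and `y`, which are orthogonal.
    have horth : ⟪(1 / 2 : ℝ) • (x + y), (1 / 2 : ℝ) • (x - y)⟫ = 0 := by
      rw [inner_smul_left, inner_smul_right, (real_inner_add_sub_eq_zero_iff x y).2 hxy]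
      simp
    have e1 := hadd _ _ horth
    have e2 := hadd ((1 / 2 : ℝ) • (x + y)) (-((1 / 2 : ℝ) • (x - y)))
      (by rw [inner_neg_right, horth, neg_zero])
    rw [heven] at e2
    rw [show (1 / 2 : ℝ) • (x + y) + (1 / 2 : ℝ) • (x - y) = x by module] at e1
    rw [show (1 / 2 : ℝ) • (x + y) + -((1 / 2 : ℝ) • (x - y)) = y by module] at e2
    linarith
  obtain ⟨u, -, -, hu⟩ := exists_orthogonal_of_norm 0 0 1 zero_le_one
  obtain ⟨u', huu', -, hu'⟩ := exists_orthogonal_of_norm u 0 1 zero_le_one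
  have hFadd : ∀ s t : ℝ, 0 ≤ s → 0 ≤ t → e (√(s + t) • u) = e (√s • u) + e (√t • u) := by
    intro s t hs ht
    have horth : ⟪√s • u, √t • u'⟫ = 0 := by
      rw [inner_smul_left, inner_smul_right, huu']; simp
    rw [hrad (√t • u) (√t • u') (by rw [norm_smul, norm_smul, hu, hu']), ← hadd _ _ horth]
    apply hrad
    rw [← sq_eq_sq₀ (norm_nonneg _) (norm_nonneg _), norm_add_sq_real, horth, norm_smul,
      norm_smul, norm_smul, hu, hu']
    simp only [Real.norm_eq_abs, mul_one, sq_abs, mul_zero, add_zero]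
    rw [Real.sq_sqrt hs, Real.sq_sqrt ht, Real.sq_sqrt (by positivity)]
  -- The odd extension to `ℝ` of `t ↦ e (√t • u)`; both square roots vanish on the wrong side.
  set G : ℝ → ℝ := fun t => e (√t • u) - e (√(-t) • u) with hG
  have hGadd : ∀ s t, G (s + t) = G s + G t := by
    intro s t
    have hmax : ∀ t : ℝ, √(max t 0) = √t := by
      intro t
      rcases le_total t 0 with h | h
      · rw [max_eq_right h, Real.sqrt_zero, Real.sqrt_eq_zero_of_nonpos h]
      · rw [max_eq_left h]
    have m : ∀ t : ℝ, 0 ≤ max t 0 := fun t => le_max_right _ _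
    have hparts : ∀ t : ℝ, max t 0 = t + max (-t) 0 := by
      intro t
      rcases le_total t 0 with h | h
      · rw [max_eq_right h, max_eq_left (by linarith)]; ring
      · rw [max_eq_left h, max_eq_right (by linarith)]; ring
    have a1 := hFadd (max (s + t) 0 + max (-s) 0) (max (-t) 0) (add_nonneg (m _) (m _)) (m _)
    have a2 := hFadd (max (s + t) 0) (max (-s) 0) (m _) (m _)
    have b1 := hFadd (max s 0 + max t 0) (max (-(s + t)) 0) (add_nonneg (m _) (m _)) (m _)
    have b2 := hFadd (max s 0) (max t 0) (m _) (m _)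
    have heq : max (s + t) 0 + max (-s) 0 + max (-t) 0
        = max s 0 + max t 0 + max (-(s + t)) 0 := by
      rw [hparts (s + t), hparts s, hparts t]; ring
    rw [heq, a2] at a1
    rw [b2] at b1
    simp only [hmax] at a1 b1
    simp only [hG]
    linarith
  have hGcont : Continuous G := by
    simp only [hG]
    fun_prop
  let L : ℝ →L[ℝ] ℝ := (AddMonoidHom.mk' G hGadd).toRealLinearMap hGcont
  have hL : ∀ t, G t = t * G 1 := by
    intro t
    have h1 : L (t • 1) = t • L 1 := L.map_smul t 1
    rw [smul_eq_mul, mul_one, smul_eq_mul] at h1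
    exact h1
  refine ⟨G 1, fun x => ?_⟩
  have hx := hL (‖x‖ ^ 2)
  have hneg : √(-‖x‖ ^ 2) = 0 := Real.sqrt_eq_zero_of_nonpos (by nlinarith [sq_nonneg ‖x‖])
  have hGx : G (‖x‖ ^ 2) = e x := by
    simp only [hG]
    rw [hneg, zero_smul, h0, sub_zero, Real.sqrt_sq (norm_nonneg _)]
    apply hrad
    rw [norm_smul, hu, mul_one, norm_norm]
  rw [← hGx, hx, mul_comm]

/-- A continuous orthogonally additive function is a quadratic `c ‖x‖² + ⟪b, x⟫`. -/
lemma orthogonally_additive_form (g : EuclideanSpace ℝ (Fin 3) → ℝ) (hcont : Continuous g)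
    (hadd : ∀ x y, ⟪x, y⟫ = 0 → g (x + y) = g x + g y) :
    ∃ (c : ℝ) (b : EuclideanSpace ℝ (Fin 3)), ∀ x, g x = c * ‖x‖ ^ 2 + ⟪b, x⟫ := by
  have hadd' : ∀ x y, ⟪x, y⟫ = 0 → g (-(x + y)) = g (-x) + g (-y) := by
    intro x y hxy
    rw [neg_add, hadd (-x) (-y) (by rw [inner_neg_neg, hxy])]
  obtain ⟨c, hc⟩ := even_quadratic (fun x => (g x + g (-x)) / 2) (by fun_prop)
    (fun x => by simp only [neg_neg]; ring)
    (fun x y hxy => by simp only [hadd x y hxy, hadd' x y hxy]; ring)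
  have ho := odd_additive (fun x => (g x - g (-x)) / 2)
    (fun x => by simp only [neg_neg]; ring)
    (fun x y hxy => by simp only [hadd x y hxy, hadd' x y hxy]; ring)
  let L : EuclideanSpace ℝ (Fin 3) →L[ℝ] ℝ :=
    (AddMonoidHom.mk' (fun x => (g x - g (-x)) / 2) ho).toRealLinearMap
      (by change Continuous (fun x => (g x - g (-x)) / 2); fun_prop)
  refine ⟨c, (InnerProductSpace.toDual ℝ _).symm L, fun x => ?_⟩
  have hL : L x = (g x - g (-x)) / 2 := rfl
  rw [InnerProductSpace.toDual_symm_apply, hL, ← hc x]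
  ring

/-- **Characterization of collisional equilibria.** If `f` is continuous, strictly positive,
rapidly decaying, with `ln f` of polynomial growth, and `f(v')f(v*') = f(v)f(v*)` for all
`v, v* ∈ ℝ³` and all unit vectors `ω`, then `f` is a Maxwellian:
`f(v) = ρ (2πθ)^{−3/2} exp(−|v−u|²/(2θ))` for some `ρ, θ > 0` and `u ∈ ℝ³`. -/
theorem collisional_equilibrium_is_maxwellian (f : EuclideanSpace ℝ (Fin 3) → ℝ)
    (hf_cont : Continuous f) (hf_pos : ∀ v, 0 < f v)
    (hf_dec : RapidlyDecaying f) (hf_log : LogPolyGrowth f)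
    (h : ∀ v vs ω : EuclideanSpace ℝ (Fin 3), ‖ω‖ = 1 →
      f (vPost v vs ω) * f (vsPost v vs ω) = f v * f vs) :
    ∃ (ρ θ : ℝ) (u : EuclideanSpace ℝ (Fin 3)), 0 < ρ ∧ 0 < θ ∧
      ∀ v, f v = ρ * (2 * Real.pi * θ) ^ (-(3 : ℝ) / 2) *
        Real.exp (-‖v - u‖ ^ 2 / (2 * θ)) := by
  have hlog : ∀ x y : EuclideanSpace ℝ (Fin 3), ⟪x, y⟫ = 0 →
      Real.log (f (x + y)) - Real.log (f 0)
        = (Real.log (f x) - Real.log (f 0)) + (Real.log (f y) - Real.log (f 0)) := by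
    intro x y hxy
    rcases eq_or_ne y 0 with rfl | hy
    · simp
    have hn : ‖y‖ ≠ 0 := norm_ne_zero_iff.2 hy
    -- Colliding `x + y` with `0` along the direction of `y` yields the velocities `x` and `y`.
    have hcol : ⟪x + y - 0, ‖y‖⁻¹ • y⟫ • (‖y‖⁻¹ • y) = y := by
      rw [sub_zero, inner_smul_right, inner_add_left, hxy, real_inner_self_eq_norm_sq, smul_smul]
      rw [show ‖y‖⁻¹ * (0 + ‖y‖ ^ 2) * ‖y‖⁻¹ = 1 by field_simp; ring, one_smul]
    have hc := h (x + y) 0 (‖y‖⁻¹ • y) (by rw [norm_smul, norm_inv, norm_norm]; field_simp)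
    rw [vPost, vsPost, hcol, add_sub_cancel_right, zero_add] at hc
    have hl := congrArg Real.log hc
    rw [Real.log_mul (hf_pos _).ne' (hf_pos _).ne',
      Real.log_mul (hf_pos _).ne' (hf_pos _).ne'] at hl
    linarith
  obtain ⟨c, b, hcb⟩ := orthogonally_additive_form
    (fun x => Real.log (f x) - Real.log (f 0))
    ((hf_cont.log fun x => (hf_pos x).ne').sub continuous_const) hlog
  have hform : ∀ v, f v = Real.exp (Real.log (f 0) + c * ‖v‖ ^ 2 + ⟪b, v⟫) := by
    intro v
    rw [← Real.exp_log (hf_pos v)]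
    congr 1
    have := hcb v
    linarith
  have hc : c < 0 := by
    by_contra hc
    push Not at hc
    obtain ⟨C, hC⟩ := hf_dec 1
    have hC0 : 0 ≤ C / f 0 := by
      have h1 := hC 0
      have h2 := hf_pos 0
      simp only [norm_zero, add_zero, one_pow, one_mul] at h1
      exact div_nonneg (h2.le.trans h1) h2.le
    -- A vector orthogonal to `b` does not see the linear term, so `f ≥ f 0` there.
    obtain ⟨w, hbw, -, hw⟩ := exists_orthogonal_of_norm b 0 (C / f 0) hC0
    have h1 := hC w
    have h2 : f 0 ≤ f w := by
      rw [hform w, hbw]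
      calc f 0 = Real.exp (Real.log (f 0)) := (Real.exp_log (hf_pos 0)).symm
        _ ≤ _ := Real.exp_le_exp.2 (by nlinarith [mul_nonneg hc (sq_nonneg ‖w‖)])
    have h3 : (1 + C / f 0) * f 0 = f 0 + C := by
      have := (hf_pos 0).ne'
      field_simp
    rw [pow_one, hw] at h1
    nlinarith [hf_pos 0]
  obtain ⟨θ, hθ, hcθ⟩ : ∃ θ : ℝ, 0 < θ ∧ c = -(1 / (2 * θ)) := by
    refine ⟨-(1 / (2 * c)), ?_, ?_⟩
    · have : 1 / (2 * c) < 0 := one_div_neg.2 (by linarith)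
      linarith
    · have := hc.ne
      field_simp
  have hP : 0 < (2 * Real.pi * θ) ^ (-(3 : ℝ) / 2) := by positivity
  refine ⟨Real.exp (Real.log (f 0) + ‖θ • b‖ ^ 2 / (2 * θ)) / (2 * Real.pi * θ) ^ (-(3 : ℝ) / 2),
    θ, θ • b, by positivity, hθ, fun v => ?_⟩
  rw [div_mul_cancel₀ _ hP.ne', ← Real.exp_add, hform v]
  congr 1
  rw [norm_sub_sq_real, inner_smul_right, real_inner_comm b v, hcθ]
  field_simp
  ring

end
end
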